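/- Suppose 1/n ≪ c, β, 1/k, 1/b < 1, and H is a k-partite k-uniform hypergraph on vertex classes X_1, ..., X_k with n ≤ |X_i| ≤ bn for each i, of density d(H) ≥ c. Suppose β|X_i| ≤ t_i ≤ |X_i| for each i. If W_i ⊆ X_i is chosen uniformly at random with |W_i| = t_i, independently for each i, and W = W_1 ∪ ... ∪ W_k, then with probability at least 1 - 1/n², the restriction H[W] has density greater than c/2. -/

import Mathlib

/-!
A tuple of independent samples `W i` can be obtained by replacing the classes `X i` by the `W i`
one at a time. Replacing a single class, with all others held fixed, changes the edge density from
the mean of a `[0, 1]`-valued function over `X i` to its mean over the random subset `W i`, and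
Hoeffding's inequality for sampling without replacement shows that such a mean drops by more than
`ε` with probability at most `exp (-t ε² / 2)`. A union bound over the classes loses `∑ i, ε i` in
density with exponentially small failure probability, which beats every power of `n` because the
sample sizes are linear in `n`.

Hoeffding's inequality follows from a bound on the moment generating function, by induction on the
sample size: a uniform `(t + 1)`-subset is a uniform point `x` together with a uniform `t`-subset of
the remaining points.
-/

section Expectation

open Finset
open scoped BigOperators

variable {κ : Type*} {s : Finset κ}

lemma expect_le_of_nonneg {f : κ → ℝ} {a : ℝ} (ha : 0 ≤ a) (h : ∀ x ∈ s, f x ≤ a) :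
    𝔼 x ∈ s, f x ≤ a := by
  obtain rfl | hs := s.eq_empty_or_nonempty
  · simpa using ha
  · exact expect_le hs h

lemma expect_mem_Icc_zero_one {f : κ → ℝ} (hf : ∀ x ∈ s, f x ∈ Set.Icc 0 1) :
    𝔼 x ∈ s, f x ∈ Set.Icc 0 1 :=
  ⟨expect_nonneg fun x hx => (hf x hx).1, expect_le_of_nonneg zero_le_one fun x hx => (hf x hx).2⟩

lemma expect_exp_mul_sub_expect_le {g : κ → ℝ} (hg : ∀ x ∈ s, g x ∈ Set.Icc 0 1) (l : ℝ) :
    𝔼 x ∈ s, Real.exp (l * (g x - 𝔼 y ∈ s, g y)) ≤ Real.exp (l ^ 2 / 2) := by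
  obtain rfl | hs := s.eq_empty_or_nonempty
  · simpa using (Real.exp_pos _).le
  set μ := 𝔼 y ∈ s, g y
  have hμ : μ ∈ Set.Icc 0 1 := expect_mem_Icc_zero_one hg
  have chord : ∀ x ∈ s, Real.exp (l * (g x - μ)) ≤ Real.cosh l + (g x - μ) * Real.sinh l := by
    intro x hx
    rw [mul_comm]
    exact Real.exp_mul_le_cosh_add_mul_sinh
      (abs_sub_le_of_nonneg_of_le (hg x hx).1 (hg x hx).2 hμ.1 hμ.2) l
  calc 𝔼 x ∈ s, Real.exp (l * (g x - μ))
      ≤ 𝔼 x ∈ s, (Real.cosh l + (g x - μ) * Real.sinh l) := expect_le_expect chord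
    _ = Real.cosh l := by
      rw [expect_add_distrib, ← expect_mul, expect_sub_distrib, expect_const hs, expect_const hs,
        sub_self, zero_mul, add_zero]
    _ ≤ Real.exp (l ^ 2 / 2) := Real.cosh_le_exp_half_sq l

open Classical in
/-- The probability that a uniformly random element of `s` satisfies `p`; it is `0` if `s` is
empty. -/
noncomputable def proportion (s : Finset κ) (p : κ → Prop) : ℝ :=
  𝔼 x ∈ s, if p x then 1 else 0

variable {p q r : κ → Prop}

lemma card_mul_proportion [DecidablePred p] : #s * proportion s p = #{x ∈ s | p x} := by
  classical
  rw [proportion, card_mul_expect, ← sum_boole]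
  congr!

lemma proportion_mono (h : ∀ x ∈ s, p x → q x) : proportion s p ≤ proportion s q := by
  classical
  refine expect_le_expect fun x hx => ?_
  have := h x hx
  split_ifs <;> simp_all

lemma proportion_le_add (h : ∀ x ∈ s, p x → q x ∨ r x) :
    proportion s p ≤ proportion s q + proportion s r := by
  classical
  rw [proportion, proportion, proportion, ← expect_add_distrib]
  refine expect_le_expect fun x hx => ?_
  have := h x hx
  split_ifs <;> simp_all

lemma mul_proportion_le_expect {f : κ → ℝ} {a : ℝ} (hf : ∀ x ∈ s, 0 ≤ f x)
    (h : ∀ x ∈ s, p x → a ≤ f x) : a * proportion s p ≤ 𝔼 x ∈ s, f x := by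
  classical
  rw [proportion, mul_expect]
  refine expect_le_expect fun x hx => ?_
  split_ifs with hp
  · simpa using h x hx hp
  · simpa using hf x hx

end Expectation

section SamplingWithoutReplacement

open Finset
open scoped BigOperators

variable {α : Type*} {X : Finset α} {g : α → ℝ}

lemma succ_nsmul_sum_powersetCard_succ [DecidableEq α] {M : Type*} [AddCommMonoid M]
    (X : Finset α) (t : ℕ) (F : Finset α → M) :
    (t + 1) • ∑ W ∈ X.powersetCard (t + 1), F W =
      ∑ x ∈ X, ∑ V ∈ (X.erase x).powersetCard t, F (insert x V) := by
  have count_points : (t + 1) • ∑ W ∈ X.powersetCard (t + 1), F W =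
      ∑ W ∈ X.powersetCard (t + 1), ∑ _x ∈ W, F W := by
    rw [smul_sum]
    refine sum_congr rfl fun W hW => ?_
    rw [sum_const, (mem_powersetCard.1 hW).2]
  rw [count_points, sum_sigma', sum_sigma']
  refine sum_bij' (fun p _ => ⟨p.2, p.1.erase p.2⟩) (fun p _ => ⟨insert p.1 p.2, p.1⟩)
    ?_ ?_ ?_ ?_ ?_
  · rintro ⟨W, x⟩ hp
    simp only [mem_sigma, mem_powersetCard] at hp ⊢
    obtain ⟨⟨hWX, hcard⟩, hx⟩ := hp
    exact ⟨hWX hx, erase_subset_erase x hWX, by rw [card_erase_of_mem hx, hcard]; rfl⟩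
  · rintro ⟨x, V⟩ hp
    simp only [mem_sigma, mem_powersetCard, subset_erase] at hp ⊢
    obtain ⟨hx, ⟨hVX, hxV⟩, hcard⟩ := hp
    exact ⟨⟨insert_subset hx hVX, by rw [card_insert_of_notMem hxV, hcard]⟩, mem_insert_self x V⟩
  · rintro ⟨W, x⟩ hp
    simp only [mem_sigma] at hp
    simp [insert_erase hp.2]
  · rintro ⟨x, V⟩ hp
    simp only [mem_sigma, mem_powersetCard, subset_erase] at hp
    simp [erase_insert hp.2.1.2]
  · rintro ⟨W, x⟩ hp
    simp only [mem_sigma] at hp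
    rw [insert_erase hp.2]

lemma expect_powersetCard_succ [DecidableEq α] (X : Finset α) (t : ℕ) (F : Finset α → ℝ) :
    𝔼 W ∈ X.powersetCard (t + 1), F W =
      𝔼 x ∈ X, 𝔼 V ∈ (X.erase x).powersetCard t, F (insert x V) := by
  obtain rfl | hX := X.eq_empty_or_nonempty
  · rw [powersetCard_eq_empty.2 (by simp), expect_empty, expect_empty]
  obtain ⟨N, hN⟩ : ∃ N, #X = N + 1 := ⟨#X - 1, by have := hX.card_pos; omega⟩
  have inner : ∀ x ∈ X, 𝔼 V ∈ (X.erase x).powersetCard t, F (insert x V) =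
      (∑ V ∈ (X.erase x).powersetCard t, F (insert x V)) / N.choose t := fun x hx => by
    rw [expect_eq_sum_div_card, card_powersetCard, card_erase_of_mem hx, hN, Nat.add_sub_cancel]
  have choose_succ : ((N : ℝ) + 1) * N.choose t = (N + 1).choose (t + 1) * (t + 1) := by
    exact_mod_cast Nat.add_one_mul_choose_eq N t
  have double_count := succ_nsmul_sum_powersetCard_succ X t F
  rw [nsmul_eq_mul, Nat.cast_succ] at double_count
  rw [expect_congr rfl inner, ← expect_div, expect_eq_sum_div_card, expect_eq_sum_div_card,
    card_powersetCard, hN, ← double_count, div_div, Nat.cast_succ, choose_succ,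
    mul_comm ((t : ℝ) + 1), mul_div_mul_right _ _ (by positivity)]

lemma sum_insert_sub_mul_expect [DecidableEq α] {x : α} {V : Finset α} {t : ℕ}
    (hx : x ∈ X) (hV : V ∈ (X.erase x).powersetCard t) :
    ∑ y ∈ insert x V, g y - (t + 1) * 𝔼 y ∈ X, g y =
      (1 - t / #(X.erase x)) * (g x - 𝔼 y ∈ X, g y) +
        (∑ y ∈ V, g y - t * 𝔼 y ∈ X.erase x, g y) := by
  obtain ⟨hVX, hVt⟩ := mem_powersetCard.1 hV
  have hxV : x ∉ V := (subset_erase.1 hVX).2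
  have hcard : (#X : ℝ) = #(X.erase x) + 1 := by exact_mod_cast (card_erase_add_one hx).symm
  have hsum : (#(X.erase x) + 1) * 𝔼 y ∈ X, g y =
      g x + #(X.erase x) * 𝔼 y ∈ X.erase x, g y := by
    rw [← hcard, card_mul_expect, card_mul_expect, add_sum_erase X g hx]
  rw [sum_insert hxV]
  obtain hN | hN := Nat.eq_zero_or_pos #(X.erase x)
  · have ht : t = 0 := by have := card_le_card hVX; omega
    simp only [ht, CharP.cast_eq_zero]
    ring
  · field_simp
    linear_combination -(t : ℝ) * hsum

lemma expect_powersetCard_exp_insert [DecidableEq α] {x : α} (hx : x ∈ X) (l : ℝ) (t : ℕ) :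
    𝔼 V ∈ (X.erase x).powersetCard t,
        Real.exp (l * (∑ y ∈ insert x V, g y - (t + 1) * 𝔼 y ∈ X, g y)) =
      Real.exp (l * (1 - t / ((#X - 1 : ℕ) : ℝ)) * (g x - 𝔼 y ∈ X, g y)) *
        𝔼 V ∈ (X.erase x).powersetCard t,
          Real.exp (l * (∑ y ∈ V, g y - t * 𝔼 y ∈ X.erase x, g y)) := by
  rw [mul_expect ((X.erase x).powersetCard t)]
  refine expect_congr rfl fun V hV => ?_
  rw [sum_insert_sub_mul_expect hx hV, card_erase_of_mem hx, mul_add, ← mul_assoc, Real.exp_add]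

lemma expect_powersetCard_exp_mul_sub_le (hg : ∀ x ∈ X, g x ∈ Set.Icc 0 1) (l : ℝ) (t : ℕ) :
    𝔼 W ∈ X.powersetCard t, Real.exp (l * (∑ x ∈ W, g x - t * 𝔼 x ∈ X, g x)) ≤
      Real.exp (t * (l ^ 2 / 2)) := by
  classical
  induction t generalizing X with
  | zero => simp
  | succ t ih =>
    obtain hXt | hXt := lt_or_ge #X (t + 1)
    · simpa [powersetCard_eq_empty.2 hXt] using (Real.exp_pos _).le
    set θ : ℝ := 1 - t / ((#X - 1 : ℕ) : ℝ)
    have hθ : θ ∈ Set.Icc 0 1 := by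
      have ht : (t : ℝ) ≤ ((#X - 1 : ℕ) : ℝ) := by exact_mod_cast Nat.le_sub_one_of_lt hXt
      exact ⟨sub_nonneg.2 (div_le_one_of_le₀ ht (Nat.cast_nonneg _)), sub_le_self _ (by positivity)⟩
    have factor : ∀ x ∈ X, 𝔼 V ∈ (X.erase x).powersetCard t,
        Real.exp (l * (∑ y ∈ insert x V, g y - (t + 1) * 𝔼 y ∈ X, g y)) ≤
          Real.exp (l * θ * (g x - 𝔼 y ∈ X, g y)) * Real.exp (t * (l ^ 2 / 2)) := by
      intro x hx
      rw [expect_powersetCard_exp_insert hx]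
      gcongr
      exact ih fun y hy => hg y (mem_of_mem_erase hy)
    calc 𝔼 W ∈ X.powersetCard (t + 1),
        Real.exp (l * (∑ x ∈ W, g x - ((t + 1 : ℕ) : ℝ) * 𝔼 x ∈ X, g x))
      _ = 𝔼 x ∈ X, 𝔼 V ∈ (X.erase x).powersetCard t,
        Real.exp (l * (∑ y ∈ insert x V, g y - (t + 1) * 𝔼 y ∈ X, g y)) := by
          rw [expect_powersetCard_succ, Nat.cast_succ]
      _ ≤ (𝔼 x ∈ X, Real.exp (l * θ * (g x - 𝔼 y ∈ X, g y))) * Real.exp (t * (l ^ 2 / 2)) := by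
          rw [expect_mul]
          exact expect_le_expect factor
      _ ≤ Real.exp ((l * θ) ^ 2 / 2) * Real.exp (t * (l ^ 2 / 2)) := by
          gcongr
          exact expect_exp_mul_sub_expect_le hg _
      _ ≤ Real.exp (((t + 1 : ℕ) : ℝ) * (l ^ 2 / 2)) := by
          rw [← Real.exp_add, Real.exp_le_exp]
          push_cast
          have : θ ^ 2 ≤ 1 := pow_le_one₀ hθ.1 hθ.2
          nlinarith [mul_le_mul_of_nonneg_left this (sq_nonneg l)]

lemma proportion_expect_lt_sub_le (hg : ∀ x ∈ X, g x ∈ Set.Icc 0 1) {ε : ℝ} (hε : 0 ≤ ε) (t : ℕ) :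
    proportion (X.powersetCard t) (fun W => 𝔼 x ∈ W, g x < 𝔼 x ∈ X, g x - ε) ≤
      Real.exp (-(t * ε ^ 2 / 2)) := by
  have mgf := expect_powersetCard_exp_mul_sub_le hg (-ε) t
  have markov : Real.exp (t * ε ^ 2) *
      proportion (X.powersetCard t) (fun W => 𝔼 x ∈ W, g x < 𝔼 x ∈ X, g x - ε) ≤
      𝔼 W ∈ X.powersetCard t, Real.exp (-ε * (∑ x ∈ W, g x - t * 𝔼 x ∈ X, g x)) := by
    refine mul_proportion_le_expect (fun W _ => (Real.exp_pos _).le) fun W hW hlow => ?_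
    rw [Real.exp_le_exp, ← card_mul_expect, (mem_powersetCard.1 hW).2]
    have : t * 𝔼 x ∈ W, g x ≤ t * (𝔼 x ∈ X, g x - ε) := by gcongr
    nlinarith
  calc _ ≤ Real.exp (t * ((-ε) ^ 2 / 2)) / Real.exp (t * ε ^ 2) :=
        (le_div_iff₀' (Real.exp_pos _)).2 (markov.trans mgf)
    _ = Real.exp (-(t * ε ^ 2 / 2)) := by
        rw [← Real.exp_sub]
        ring_nf

end SamplingWithoutReplacement

section IndependentSamples

open Finset Function Fintype
open scoped BigOperators

variable {ι : Type*} [DecidableEq ι] {α : ι → Type*}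

lemma piecewise_update_left_of_notMem {s : Finset ι} {i : ι} (hi : i ∉ s) (f g : ∀ i, α i)
    (a : α i) : s.piecewise (update f i a) g = s.piecewise f g :=
  s.piecewise_congr (fun _ hj => update_of_ne (ne_of_mem_of_not_mem hj hi) ..) fun _ _ => rfl

variable [Fintype ι]

lemma expect_piFinset_update {M : Type*} [AddCommMonoid M] [Module ℚ≥0 M] (s : ∀ i, Finset (α i))
    {i : ι} (hs : (s i).Nonempty) (A : Finset (α i)) (f : (∀ i, α i) → M) :
    𝔼 x ∈ piFinset (update s i A), f x = 𝔼 a ∈ A, 𝔼 x ∈ piFinset s, f (update x i a) := by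
  calc 𝔼 x ∈ piFinset (update s i A), f x
      = 𝔼 p ∈ piFinset (update s i A) ×ˢ s i, f p.1 := by
        rw [expect_product]
        exact expect_congr rfl fun x _ => (expect_const hs (f x)).symm
    _ = 𝔼 p ∈ A ×ˢ piFinset s, f (update p.2 i p.1) := by
        -- The bijection swaps the `i`-th coordinate of the tuple with the extra point.
        refine expect_nbij' (fun p => (p.1 i, update p.1 i p.2))
          (fun p => (update p.2 i p.1, p.2 i)) ?_ ?_ ?_ ?_ ?_
        · rintro ⟨x, b⟩ hp
          simp only [mem_product, mem_piFinset] at hp ⊢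
          refine ⟨by simpa using hp.1 i, fun j => ?_⟩
          obtain rfl | hj := eq_or_ne j i
          · simpa using hp.2
          · simpa [hj] using hp.1 j
        · rintro ⟨a, x⟩ hp
          simp only [mem_product, mem_piFinset] at hp ⊢
          refine ⟨fun j => ?_, hp.2 i⟩
          obtain rfl | hj := eq_or_ne j i
          · simpa using hp.1
          · simpa [hj] using hp.2 j
        all_goals simp
    _ = 𝔼 a ∈ A, 𝔼 x ∈ piFinset s, f (update x i a) := expect_product ..

lemma expect_piFinset_resample {M : Type*} [AddCommMonoid M] [Module ℚ≥0 M]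
    (s : ∀ i, Finset (α i)) (i : ι) (f : (∀ i, α i) → M) :
    𝔼 x ∈ piFinset s, f x = 𝔼 x ∈ piFinset s, 𝔼 a ∈ s i, f (update x i a) := by
  obtain hs | hs := (s i).eq_empty_or_nonempty
  · simp [piFinset_eq_empty.2 ⟨i, hs⟩]
  · rw [expect_comm, ← expect_piFinset_update s hs, update_eq_self]

lemma proportion_piFinset_le {s : ∀ i, Finset (α i)} {p : (∀ i, α i) → Prop} {δ : ℝ} (hδ : 0 ≤ δ)
    (i : ι) (h : ∀ x ∈ piFinset s, proportion (s i) (fun a => p (update x i a)) ≤ δ) :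
    proportion (piFinset s) p ≤ δ := by
  rw [proportion, expect_piFinset_resample s i]
  exact expect_le_of_nonneg hδ h

/-- The mean of `f` over the box obtained from `∏ i, X i` by replacing the sides `X i`, `i ∈ s`, by
the samples `W i`. It interpolates between the mean over `X` (`s = ∅`) and the mean over `W`
(`s = univ`). -/
noncomputable def hybridMean (f : (∀ i, α i) → ℝ) (X : ∀ i, Finset (α i)) (s : Finset ι)
    (W : ∀ i, Finset (α i)) : ℝ :=
  𝔼 x ∈ piFinset (s.piecewise W X), f x

/-- The mean of `f` over the slice of the hybrid box with `i`-th coordinate `a`; as `a` ranges over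
side `i`, these slice means average to the mean over the box. -/
noncomputable def hybridSliceMean (f : (∀ i, α i) → ℝ) (X : ∀ i, Finset (α i)) (s : Finset ι)
    (W : ∀ i, Finset (α i)) (i : ι) (a : α i) : ℝ :=
  𝔼 x ∈ piFinset (s.piecewise W X), f (update x i a)

variable {X W : ∀ i, Finset (α i)} {f : (∀ i, α i) → ℝ} {s : Finset ι} {i : ι}

lemma hybridMean_update_of_notMem (hi : i ∉ s) (V : Finset (α i)) :
    hybridMean f X s (update W i V) = hybridMean f X s W := by
  rw [hybridMean, piecewise_update_left_of_notMem hi, hybridMean]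

lemma hybridMean_eq_expect (hX : (X i).Nonempty) (hi : i ∉ s) :
    hybridMean f X s W = 𝔼 a ∈ X i, hybridSliceMean f X s W i a := by
  have side : s.piecewise W X i = X i := piecewise_eq_of_notMem _ _ _ hi
  have := expect_piFinset_update (s.piecewise W X) (side ▸ hX) (X i) f
  rwa [← side, update_eq_self, side] at this

lemma hybridMean_insert_update (hX : (X i).Nonempty) (hi : i ∉ s) (V : Finset (α i)) :
    hybridMean f X (insert i s) (update W i V) = 𝔼 a ∈ V, hybridSliceMean f X s W i a := by
  have side : s.piecewise W X i = X i := piecewise_eq_of_notMem _ _ _ hi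
  have box : (insert i s).piecewise (update W i V) X = update (s.piecewise W X) i V := by
    rw [piecewise_insert, update_self, piecewise_update_left_of_notMem hi]
  rw [hybridMean, box]
  exact expect_piFinset_update (s.piecewise W X) (side ▸ hX) V f

lemma hybridSliceMean_mem_Icc (hf : ∀ x ∈ piFinset X, f x ∈ Set.Icc 0 1) (hW : ∀ j, W j ⊆ X j)
    {a : α i} (ha : a ∈ X i) : hybridSliceMean f X s W i a ∈ Set.Icc 0 1 := by
  have box_subset : s.piecewise W X ≤ X := s.piecewise_le_of_le_of_le hW le_rfl
  refine expect_mem_Icc_zero_one fun x hx => hf _ (mem_piFinset.2 fun j => ?_)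
  obtain rfl | hj := eq_or_ne j i
  · simpa using ha
  · simpa [hj] using box_subset j (mem_piFinset.1 hx j)

lemma proportion_hybridMean_insert_lt_le (hX : (X i).Nonempty)
    (hf : ∀ x ∈ piFinset X, f x ∈ Set.Icc 0 1) (hi : i ∉ s) (t : ι → ℕ) {ε : ℝ} (hε : 0 ≤ ε) :
    proportion (piFinset fun j => (X j).powersetCard (t j))
        (fun W => hybridMean f X (insert i s) W < hybridMean f X s W - ε) ≤
      Real.exp (-(t i * ε ^ 2 / 2)) := by
  refine proportion_piFinset_le (Real.exp_pos _).le i fun W hW => ?_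
  have hWX : ∀ j, W j ⊆ X j := fun j => (mem_powersetCard.1 (mem_piFinset.1 hW j)).1
  simp only [hybridMean_insert_update hX hi, hybridMean_update_of_notMem hi,
    hybridMean_eq_expect (f := f) (W := W) hX hi]
  exact proportion_expect_lt_sub_le (fun a ha => hybridSliceMean_mem_Icc hf hWX ha) hε (t i)

lemma proportion_expect_piFinset_lt_le (hX : ∀ i, (X i).Nonempty)
    (hf : ∀ x ∈ piFinset X, f x ∈ Set.Icc 0 1) (t : ι → ℕ) {ε : ι → ℝ} (hε : ∀ i, 0 ≤ ε i) :
    proportion (piFinset fun i => (X i).powersetCard (t i))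
        (fun W => 𝔼 x ∈ piFinset W, f x < 𝔼 x ∈ piFinset X, f x - ∑ i, ε i) ≤
      ∑ i, Real.exp (-(t i * ε i ^ 2 / 2)) := by
  suffices partial_replacement : ∀ s : Finset ι,
      proportion (piFinset fun i => (X i).powersetCard (t i))
          (fun W => hybridMean f X s W < 𝔼 x ∈ piFinset X, f x - ∑ i ∈ s, ε i) ≤
        ∑ i ∈ s, Real.exp (-(t i * ε i ^ 2 / 2)) by
    simpa [hybridMean] using partial_replacement univ
  intro s
  induction s using Finset.induction_on with
  | empty => simp [proportion, hybridMean]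
  | insert i s hi ih =>
    rw [sum_insert hi, sum_insert hi]
    refine (proportion_le_add fun W _ hlow => ?_).trans
      (add_le_add (proportion_hybridMean_insert_lt_le (hX i) hf hi t (hε i)) ih)
    by_contra! hboth
    linarith [hboth.1, hboth.2]

end IndependentSamples

section PartiteHypergraph

open Finset Function Fintype
open scoped BigOperators

variable {ι α : Type*} [Fintype ι] [DecidableEq ι] [DecidableEq α] {X W : ι → Finset α}
  {H : Finset (Finset α)}

/-- The density of the partite hypergraph that `H` induces on the classes `W i`: the proportion of
tuples in `∏ i, W i` whose underlying set is an edge. For pairwise disjoint classes a tuple is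
determined by its underlying set, so this is the number of induced edges over `∏ i, #(W i)`. -/
noncomputable def partiteDensity (H : Finset (Finset α)) (W : ι → Finset α) : ℝ :=
  proportion (piFinset W) fun x => univ.image x ∈ H

lemma prod_card_mul_partiteDensity (H : Finset (Finset α)) (W : ι → Finset α) :
    (∏ i, (#(W i) : ℝ)) * partiteDensity H W = #{x ∈ piFinset W | univ.image x ∈ H} := by
  rw [partiteDensity, ← card_mul_proportion, card_piFinset, Nat.cast_prod]

lemma injOn_image_univ_piFinset (hX : Pairwise (Disjoint on X)) :
    Set.InjOn (fun x : ι → α => univ.image x) (piFinset X) := by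
  intro x hx y hy hxy
  rw [mem_coe, mem_piFinset] at hx hy
  funext i
  have hi : x i ∈ univ.image y := by
    rw [← show univ.image x = univ.image y from hxy]
    exact mem_image_of_mem x (mem_univ i)
  obtain ⟨j, -, hj⟩ := mem_image.1 hi
  obtain rfl : i = j := hX.eq (not_disjoint_iff.2 ⟨x i, hx i, hj ▸ hy j⟩)
  exact hj.symm

lemma exists_mem_piFinset_image_univ_eq (hX : Pairwise (Disjoint on X)) {e : Finset α}
    (he : ∀ i, ∃ a ∈ e, a ∈ X i) (hcard : #e ≤ Fintype.card ι) :
    ∃ x ∈ piFinset X, univ.image x = e := by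
  choose x hxe hxX using he
  have hinj : Injective x := fun i j hij =>
    hX.eq (not_disjoint_iff.2 ⟨x i, hxX i, hij ▸ hxX j⟩)
  refine ⟨x, mem_piFinset.2 hxX, eq_of_subset_of_card_le ?_ ?_⟩
  · exact image_subset_iff.2 fun i _ => hxe i
  · rwa [card_image_of_injective _ hinj, card_univ]

lemma card_le_prod_card_mul_partiteDensity (hX : Pairwise (Disjoint on X))
    (hH : ∀ e ∈ H, (∀ i, ∃ a ∈ e, a ∈ X i) ∧ #e ≤ Fintype.card ι) :
    #H ≤ (∏ i, (#(X i) : ℝ)) * partiteDensity H X := by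
  rw [prod_card_mul_partiteDensity, Nat.cast_le]
  refine card_le_card_of_surjOn (fun x => univ.image x) fun e he => ?_
  obtain ⟨x, hx, rfl⟩ := exists_mem_piFinset_image_univ_eq hX (hH e he).1 (hH e he).2
  exact ⟨x, mem_filter.2 ⟨hx, he⟩, rfl⟩

lemma prod_card_mul_partiteDensity_le (hW : Pairwise (Disjoint on W)) :
    (∏ i, (#(W i) : ℝ)) * partiteDensity H W ≤ #{e ∈ H | e ⊆ univ.biUnion W} := by
  rw [prod_card_mul_partiteDensity, Nat.cast_le]
  refine card_le_card_of_injOn (fun x => univ.image x) (fun x hx => ?_)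
    ((injOn_image_univ_piFinset hW).mono (coe_subset.2 (filter_subset _ _)))
  obtain ⟨hxW, hxH⟩ := mem_filter.1 hx
  refine mem_filter.2 ⟨hxH, image_subset_iff.2 fun i _ => ?_⟩
  exact mem_biUnion.2 ⟨i, mem_univ i, mem_piFinset.1 hxW i⟩

lemma proportion_partiteDensity_lt_le (H : Finset (Finset α)) (hX : ∀ i, (X i).Nonempty) (t : ι → ℕ)
    {ε : ι → ℝ} (hε : ∀ i, 0 ≤ ε i) :
    proportion (piFinset fun i => (X i).powersetCard (t i))
        (fun W => partiteDensity H W < partiteDensity H X - ∑ i, ε i) ≤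
      ∑ i, Real.exp (-(t i * ε i ^ 2 / 2)) := by
  classical
  exact proportion_expect_piFinset_lt_le hX (fun x _ => by split_ifs <;> simp) t hε

lemma proportion_card_induced_le (hX : ∀ i, (X i).Nonempty) (hdisj : Pairwise (Disjoint on X))
    (hH : ∀ e ∈ H, (∀ i, ∃ a ∈ e, a ∈ X i) ∧ #e ≤ Fintype.card ι) {c c' : ℝ}
    (hc : c * ∏ i, (#(X i) : ℝ) ≤ #H) {t : ι → ℕ} (ht : ∀ i, 0 < t i) {ε : ι → ℝ}
    (hε : ∀ i, 0 ≤ ε i) (hsum : c' < c - ∑ i, ε i) :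
    proportion (piFinset fun i => (X i).powersetCard (t i))
        (fun W => ¬ c' * ∏ i, (t i : ℝ) < #{e ∈ H | e ⊆ univ.biUnion W}) ≤
      ∑ i, Real.exp (-(t i * ε i ^ 2 / 2)) := by
  refine (proportion_mono fun W hW hsparse => ?_).trans (proportion_partiteDensity_lt_le H hX t hε)
  have hWX : ∀ i, W i ⊆ X i ∧ #(W i) = t i := fun i => mem_powersetCard.1 (mem_piFinset.1 hW i)
  have density_X : c ≤ partiteDensity H X := by
    have hpos : 0 < ∏ i, (#(X i) : ℝ) := prod_pos fun i _ => mod_cast (hX i).card_pos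
    refine le_of_mul_le_mul_left ?_ hpos
    rw [mul_comm]
    exact hc.trans (card_le_prod_card_mul_partiteDensity hdisj hH)
  have density_W : partiteDensity H W ≤ c' := by
    have hpos : 0 < ∏ i, (t i : ℝ) := prod_pos fun i _ => mod_cast ht i
    have hWdisj : Pairwise (Disjoint on W) := fun i j hij =>
      (hdisj hij).mono (hWX i).1 (hWX j).1
    have hcount := prod_card_mul_partiteDensity_le (H := H) hWdisj
    simp only [hWX] at hcount
    refine le_of_mul_le_mul_left ?_ hpos
    rw [mul_comm _ c']
    exact hcount.trans (not_lt.1 hsparse)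
  linarith

lemma proportion_card_induced_le_card_mul_exp (hX : ∀ i, (X i).Nonempty)
    (hdisj : Pairwise (Disjoint on X))
    (hH : ∀ e ∈ H, (∀ i, ∃ a ∈ e, a ∈ X i) ∧ #e ≤ Fintype.card ι) {c c' : ℝ}
    (hc : c * ∏ i, (#(X i) : ℝ) ≤ #H) (hc' : c' < c) {t : ι → ℕ} {τ : ℝ} (hτ : 0 < τ)
    (ht : ∀ i, τ ≤ t i) :
    proportion (piFinset fun i => (X i).powersetCard (t i))
        (fun W => ¬ c' * ∏ i, (t i : ℝ) < #{e ∈ H | e ⊆ univ.biUnion W}) ≤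
      Fintype.card ι * Real.exp (-(τ * ((c - c') / (Fintype.card ι + 1)) ^ 2 / 2)) := by
  set ε : ℝ := (c - c') / (Fintype.card ι + 1) with hε
  have hε0 : 0 < ε := div_pos (sub_pos.2 hc') (by positivity)
  have total_loss : c' < c - ∑ _i : ι, ε := by
    have : (Fintype.card ι + 1) * ε = c - c' := by rw [hε]; field_simp
    rw [sum_const, card_univ, nsmul_eq_mul]
    linarith
  have htpos : ∀ i, 0 < t i := fun i => Nat.cast_pos.1 (hτ.trans_le (ht i))
  refine (proportion_card_induced_le hX hdisj hH hc htpos (fun _ => hε0.le) total_loss).trans ?_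
  rw [← nsmul_eq_mul]
  refine sum_le_card_nsmul _ _ _ fun i _ => ?_
  gcongr
  exact ht i

end PartiteHypergraph

lemma eventually_pow_mul_mul_exp_neg_le_one (m : ℕ) (K : ℝ) {a : ℝ} (ha : 0 < a) :
    ∀ᶠ n : ℕ in Filter.atTop, (n : ℝ) ^ m * (K * Real.exp (-(a * n))) ≤ 1 := by
  have decay : Filter.Tendsto (fun n : ℕ => K / a ^ m * ((a * n) ^ m * Real.exp (-(a * n))))
      Filter.atTop (nhds (K / a ^ m * 0)) :=
    ((Real.tendsto_pow_mul_exp_neg_atTop_nhds_zero m).comp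
      (tendsto_natCast_atTop_atTop.const_mul_atTop ha)).const_mul _
  rw [mul_zero] at decay
  filter_upwards [decay.eventually_le_const zero_lt_one] with n hn
  refine le_of_eq_of_le ?_ hn
  rw [mul_pow]
  field_simp

theorem stmt_11_general {ι : Type*} [Fintype ι] [DecidableEq ι] {c c' β : ℝ} (hc : c' < c)
    (hβ : 0 < β) (m : ℕ) :
    ∃ n0 : ℕ, ∀ n, n0 ≤ n → ∀ (α : Type*) [DecidableEq α] (X : ι → Finset α),
      (∀ i j, i ≠ j → Disjoint (X i) (X j)) → (∀ i, n ≤ (X i).card) →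
      ∀ H : Finset (Finset α),
      (∀ e ∈ H, (∀ i, (e.filter (· ∈ X i)).card = 1) ∧ e.card = Fintype.card ι) →
      c * ∏ i, ((X i).card : ℝ) ≤ (H.card : ℝ) →
      ∀ t : ι → ℕ, (∀ i, β * (X i).card ≤ (t i : ℝ)) →
      n ^ m * ((Fintype.piFinset fun i => (X i).powersetCard (t i)).filter fun W =>
          ¬ (c' * ∏ i, (t i : ℝ) <
            ((H.filter fun e => e ⊆ Finset.univ.biUnion W).card : ℝ))).card
        ≤ (Fintype.piFinset fun i => (X i).powersetCard (t i)).card := by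
  set γ : ℝ := β * ((c - c') / (Fintype.card ι + 1)) ^ 2 / 2 with hγ
  have hγ0 : 0 < γ := by
    have := sub_pos.2 hc
    positivity
  obtain ⟨n0, hn0⟩ := Filter.eventually_atTop.1
    (eventually_pow_mul_mul_exp_neg_le_one m (Fintype.card ι) hγ0)
  refine ⟨max n0 1, fun n hn α _ X hdisj hcard H hH hd t ht => ?_⟩
  have hn1 : 1 ≤ n := le_of_max_le_right hn
  have hX : ∀ i, (X i).Nonempty := fun i => Finset.card_pos.1 (hn1.trans (hcard i))
  have htn : ∀ i, β * n ≤ t i := fun i => le_trans (by gcongr; exact hcard i) (ht i)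
  have hH' : ∀ e ∈ H, (∀ i, ∃ a ∈ e, a ∈ X i) ∧ e.card ≤ Fintype.card ι := fun e he =>
    ⟨fun i => Finset.filter_nonempty_iff.1 (Finset.card_pos.1 (by simp [(hH e he).1 i])),
      (hH e he).2.le⟩
  have failure := proportion_card_induced_le_card_mul_exp hX (fun i j => hdisj i j) hH' hd hc
    (mul_pos hβ (Nat.cast_pos.2 hn1)) htn
  rw [← Nat.cast_le (α := ℝ), Nat.cast_mul, Nat.cast_pow, ← card_mul_proportion, mul_left_comm]
  refine mul_le_of_le_one_right (Nat.cast_nonneg _) (le_trans ?_ (hn0 n (le_of_max_le_left hn)))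
  gcongr
  exact failure.trans_eq (by rw [hγ]; ring_nf)

/-- Random splitting preserves density.  For all `c, β, k, b` there is `n₀` such that: if
`H` is a `k`-partite `k`-graph on classes `X₁, …, X_k` with `n ≤ |Xᵢ| ≤ bn` (`n ≥ n₀`) and
density at least `c`, and `β|Xᵢ| ≤ tᵢ ≤ |Xᵢ|`, then among all choices of `Wᵢ ⊆ Xᵢ` with
`|Wᵢ| = tᵢ` (uniform and independent over the classes), the proportion for which the induced
subgraph `H[W]` has density at most `c/2` is at most `1/n²`. -/
theorem stmt_11 (c β : ℝ) (k b : ℕ) (hc : 0 < c) (hc1 : c < 1) (hβ : 0 < β) (hβ1 : β < 1)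
    (hk : 2 ≤ k) (hb : 1 ≤ b) :
    ∃ n0 : ℕ, ∀ n, n0 ≤ n → ∀ (α : Type) [DecidableEq α],
      ∀ X : Fin k → Finset α, (∀ i j, i ≠ j → Disjoint (X i) (X j)) →
      (∀ i, n ≤ (X i).card ∧ (X i).card ≤ b * n) →
      ∀ H : Finset (Finset α),
      (∀ e ∈ H, (∀ i, (e.filter (· ∈ X i)).card = 1) ∧ e.card = k) →
      c * ∏ i, ((X i).card : ℝ) ≤ (H.card : ℝ) →
      ∀ t : Fin k → ℕ, (∀ i, β * (X i).card ≤ (t i : ℝ) ∧ t i ≤ (X i).card) →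
      n ^ 2 * ((Fintype.piFinset fun i => (X i).powersetCard (t i)).filter fun W =>
          ¬ (c / 2 * ∏ i, (t i : ℝ) <
            ((H.filter fun e => e ⊆ Finset.univ.biUnion W).card : ℝ))).card
        ≤ (Fintype.piFinset fun i => (X i).powersetCard (t i)).card := by
  obtain ⟨n0, hn0⟩ := stmt_11_general (ι := Fin k) (half_lt_self hc) hβ 2
  exact ⟨n0, fun n hn α _ X hX hcard H hH hd t ht => hn0 n hn α X hX (fun i => (hcard i).1) H
    (by simpa using hH) hd t fun i => (ht i).1⟩
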